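/- arXiv:2010.10989 — 3 statements merged into one kernel-verified Lean document; each statement's English description precedes it below -/
import Mathlib

section
/- For every k ∈ ℕ there exists ε = ε(k) > 0 such that: if (Z_1, ..., Z_k) is a mean-zero multivariate Gaussian vector with E[Z_j^2] = 1 for all j and |E[Z_i Z_j]| ≤ ε for all i ≠ j, then the probability that all Z_j have the same sign is at most 2^{-k+2}. -/
open MeasureTheory ProbabilityTheory

open Filter Topology in
lemma wcg_gauss_Ici : gaussianReal 0 1 (Set.Ici 0) = 1 / 2 ∧ gaussianReal 0 1 (Set.Iic 0) = 1 / 2 := by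
  have : NullSingletonClass (gaussianReal 0 1) := nullSingletonClass_gaussianReal one_ne_zero
  have h1 : gaussianReal 0 1 (Set.Ici 0) = gaussianReal 0 1 (Set.Iic 0) := by
    have h := gaussianReal_map_neg (μ := 0) (v := 1)
    rw [neg_zero] at h
    conv_lhs => rw [← h]
    rw [Measure.map_apply measurable_neg measurableSet_Ici]
    congr 1
    ext x
    simp
  have h2 : gaussianReal 0 1 (Set.Ici 0) + gaussianReal 0 1 (Set.Iic 0) = 1 := by
    rw [← measure_congr (Iio_ae_eq_Iic (μ := gaussianReal 0 1) (a := 0)), add_comm,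
      ← measure_union _ measurableSet_Ici, Set.Iio_union_Ici, measure_univ]
    exact Set.disjoint_left.2 fun x hx hx' => not_lt.2 (Set.mem_Ici.1 hx') (Set.mem_Iio.1 hx)
  rw [← h1, ← two_mul] at h2
  have h3 : gaussianReal 0 1 (Set.Ici 0) = 1 / 2 := by
    rw [ENNReal.eq_div_iff (by simp) (by simp)]
    exact h2
  exact ⟨h3, h1 ▸ h3⟩

def wcgF (k : ℕ) : Set (EuclideanSpace ℝ (Fin k)) :=
  {x | ∀ j, 0 ≤ x j} ∪ {x | ∀ j, x j ≤ 0}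

lemma wcgF_closed (k : ℕ) : IsClosed (wcgF k) := by
  apply IsClosed.union
  · rw [Set.ofPred_forall]
    exact isClosed_iInter fun j => isClosed_le continuous_const (by fun_prop)
  · rw [Set.ofPred_forall]
    exact isClosed_iInter fun j => isClosed_le (by fun_prop) continuous_const

lemma wcgF_std (k : ℕ) : stdGaussian (EuclideanSpace ℝ (Fin k)) (wcgF k) ≤ 2 * (1 / 2) ^ k := by
  rw [← map_pi_eq_stdGaussian, Measure.map_apply (by fun_prop) (wcgF_closed k).measurableSet]
  have : (WithLp.toLp 2 : (Fin k → ℝ) → EuclideanSpace ℝ (Fin k)) ⁻¹' wcgF k =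
      (Set.univ.pi fun _ => Set.Ici 0) ∪ (Set.univ.pi fun _ => Set.Iic 0) := by
    ext x
    simp [wcgF, Pi.le_def]
  rw [this]
  refine (measure_union_le _ _).trans ?_
  rw [Measure.pi_pi, Measure.pi_pi, wcg_gauss_Ici.1, wcg_gauss_Ici.2]
  simp [two_mul]

open Filter Topology in
lemma wcg_charFun {k : ℕ} {Ω : Type} [MeasurableSpace Ω] (P : Measure Ω)
    (Z : Fin k → Ω → ℝ) (hZ : ∀ j, Measurable (Z j)) (M : Fin k → Fin k → ℝ)
    (h : ∀ c : Fin k → ℝ,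
        P.map (fun ω => ∑ i, c i * Z i ω) =
          gaussianReal 0 (∑ i, ∑ j, c i * c j * M i j).toNNReal)
    (t : EuclideanSpace ℝ (Fin k)) :
    charFun (P.map (fun ω => WithLp.toLp 2 (fun j => Z j ω) : Ω → EuclideanSpace ℝ (Fin k))) t =
      Complex.exp (- ((max (∑ i, ∑ j, t i * t j * M i j) 0 : ℝ) : ℂ) / 2) := by
  have h1 := charFun_gaussianReal (μ := 0) (v := (∑ i, ∑ j, t i * t j * M i j).toNNReal) 1
  rw [← h (fun i => t i), charFun_apply_real,
    integral_map (Measurable.aemeasurable (by fun_prop))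
    (Measurable.aestronglyMeasurable (by fun_prop))] at h1
  rw [charFun_apply, integral_map (Measurable.aemeasurable (by fun_prop))
    (Measurable.aestronglyMeasurable (by fun_prop))]
  have e : ∀ ω, inner ℝ (WithLp.toLp 2 (fun j => Z j ω) : EuclideanSpace ℝ (Fin k)) t
      = ∑ i, t i * Z i ω := by
    intro ω
    simp [PiLp.inner_apply]
  simp only [e]
  simp only [Complex.ofReal_one, one_mul] at h1
  rw [h1]
  congr 1
  rw [← Real.coe_toNNReal']
  simp
  ring

/-- for each `k` there is `ε > 0` such that any mean-zero Gaussian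
vector `(Z 1, …, Z k)` with unit variances and pairwise correlations at most `ε`
in absolute value has all coordinates of the same sign with probability at most
`2^(-k+2)`.  The Gaussian hypothesis is expressed by requiring every linear
combination to have a (mean-zero) Gaussian law with the appropriate variance. -/
theorem weakly_correlated_gaussian_sign_change (k : ℕ) :
    ∃ ε > (0:ℝ), ∀ {Ω : Type} [MeasurableSpace Ω] (P : Measure Ω),
      IsProbabilityMeasure P → ∀ (Z : Fin k → Ω → ℝ),
      (∀ j, Measurable (Z j)) →
      (∀ c : Fin k → ℝ,
        P.map (fun ω => ∑ i, c i * Z i ω) =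
          gaussianReal 0
            (∑ i, ∑ j, c i * c j * ∫ ω, Z i ω * Z j ω ∂P).toNNReal) →
      (∀ j, ∫ ω, (Z j ω) ^ 2 ∂P = 1) →
      (∀ i j, i ≠ j → |∫ ω, Z i ω * Z j ω ∂P| ≤ ε) →
      P {ω | (∀ j, 0 < Z j ω) ∨ (∀ j, Z j ω < 0)} ≤ (1 / 2) ^ (k - 2) := by
  rcases Nat.lt_or_ge k 2 with hk | hk
  · refine ⟨1, one_pos, ?_⟩
    intro Ω _ P hP Z _ _ _ _
    rw [Nat.sub_eq_zero_of_le hk.le, pow_zero]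
    exact prob_le_one
  by_contra hcon
  have key : ∀ n : ℕ, ∃ (μ : ProbabilityMeasure (EuclideanSpace ℝ (Fin k)))
      (M : Fin k → Fin k → ℝ),
      (∀ i j, |M i j - if i = j then 1 else 0| ≤ 1 / ((n : ℝ) + 1)) ∧
      (∀ t : EuclideanSpace ℝ (Fin k), charFun (μ : Measure (EuclideanSpace ℝ (Fin k))) t =
        Complex.exp (- ((max (∑ i, ∑ j, t i * t j * M i j) 0 : ℝ) : ℂ) / 2)) ∧
      (1 / 2) ^ (k - 2) ≤ (μ : Measure (EuclideanSpace ℝ (Fin k))) (wcgF k) := by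
    intro n
    by_contra hn
    apply hcon
    refine ⟨1 / ((n : ℝ) + 1), by positivity, ?_⟩
    intro Ω _ P hP Z hZ hG hV hC
    by_contra hlt
    apply hn
    have hm : Measurable
        (fun ω => WithLp.toLp 2 (fun j => Z j ω) : Ω → EuclideanSpace ℝ (Fin k)) := by fun_prop
    refine ⟨⟨P.map (fun ω => WithLp.toLp 2 (fun j => Z j ω)),
      Measure.isProbabilityMeasure_map hm.aemeasurable⟩,
      fun i j => ∫ ω, Z i ω * Z j ω ∂P, ?_, ?_, ?_⟩
    · intro i j
      by_cases hij : i = j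
      · subst hij
        have := hV i
        simp only [pow_two] at this
        simp only [this, if_true, sub_self, abs_zero]
        positivity
      · simpa [hij] using hC i j hij
    · intro t
      exact wcg_charFun P Z hZ _ hG t
    · refine (not_le.1 hlt).le.trans ?_
      simp only [ProbabilityMeasure.coe_mk]
      rw [Measure.map_apply hm (wcgF_closed k).measurableSet]
      apply measure_mono
      rintro ω (h | h)
      · exact Or.inl fun j => (h j).le
      · exact Or.inr fun j => (h j).le
  choose μ M hM hchar hF using key
  have hMlim : ∀ i j, Filter.Tendsto (fun n => M n i j) Filter.atTop
      (nhds (if i = j then 1 else 0)) := by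
    intro i j
    rw [tendsto_iff_dist_tendsto_zero]
    refine squeeze_zero (fun _ => dist_nonneg) (fun n => ?_)
      tendsto_one_div_add_atTop_nhds_zero_nat
    rw [Real.dist_eq]
    exact hM n i j
  let ν : ProbabilityMeasure (EuclideanSpace ℝ (Fin k)) :=
    ⟨stdGaussian (EuclideanSpace ℝ (Fin k)), inferInstance⟩
  have hlim : Filter.Tendsto μ Filter.atTop (nhds ν) := by
    refine ProbabilityMeasure.tendsto_iff_tendsto_charFun.2 fun t => ?_
    have e : charFun (ν : Measure (EuclideanSpace ℝ (Fin k))) t =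
        Complex.exp (- ((max (∑ i, ∑ j, t i * t j * (if i = j then 1 else 0)) 0 : ℝ) : ℂ) / 2) := by
      have e1 : (∑ i, ∑ j, t i * t j * (if i = j then (1 : ℝ) else 0)) = ‖t‖ ^ 2 := by
        rw [EuclideanSpace.real_norm_sq_eq]
        simp [pow_two]
      rw [e1, max_eq_left (by positivity)]
      simp only [ν, ProbabilityMeasure.coe_mk]
      rw [charFun_stdGaussian]
      simp
    rw [e]
    simp only [hchar]
    have hc : Continuous fun x : ℝ => Complex.exp (- ((max x 0 : ℝ) : ℂ) / 2) := by fun_prop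
    refine (hc.tendsto _).comp ?_
    exact tendsto_finsetSum _ fun i _ => tendsto_finsetSum _ fun j _ =>
      (hMlim i j).const_mul _
  have h1 := ProbabilityMeasure.limsup_measure_closed_le_of_tendsto hlim (wcgF_closed k)
  have h2 : (1 / 2) ^ (k - 2) ≤ (Filter.limsup (fun n =>
      (μ n : Measure (EuclideanSpace ℝ (Fin k))) (wcgF k)) Filter.atTop) := by
    refine le_trans ?_ Filter.liminf_le_limsup
    exact Filter.le_liminf_of_le (by isBoundedDefault) (Filter.Eventually.of_forall hF)
  have h3 := (h2.trans h1).trans (wcgF_std k)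
  obtain ⟨m, rfl⟩ := Nat.exists_eq_add_of_le hk
  rw [Nat.add_sub_cancel_left] at h3
  have h4 := ENNReal.toReal_mono (by finiteness) h3
  simp only [ENNReal.toReal_mul, ENNReal.toReal_pow, ENNReal.toReal_div, ENNReal.toReal_one,
    ENNReal.toReal_ofNat, pow_add] at h4
  have : (0 : ℝ) < (1 / 2) ^ m := by positivity
  linarith
end

section
/- Let g be the mean-zero Gaussian process on ℝ with covariance E[g(x)g(y)] = ∫_0^1 e^{(x+y)t} dt, which is almost surely smooth. Then for each M > 0, P(∃ x ∈ [-M,M] such that |g(x)| ≤ ε and |g'(x)| ≤ ε^{1/4}) = O(ε^{1/8}) as ε → 0. -/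
open MeasureTheory ProbabilityTheory Real
open scoped ENNReal

lemma aux_law {Ω : Type*} [MeasurableSpace Ω] (P : Measure Ω)
    (g : Ω → ℝ → ℝ)
    (hgauss : ∀ (m : ℕ) (c : Fin m → ℝ) (x : Fin m → ℝ),
      P.map (fun ω => ∑ i, c i * g ω (x i)) =
        gaussianReal 0
          (∑ i, ∑ j, c i * c j *
            ∫ t in (0:ℝ)..1, Real.exp ((x i + x j) * t)).toNNReal)
    (m : ℕ) (c : Fin m → ℝ) (x : Fin m → ℝ) :
    P.map (fun ω => ∑ i, c i * g ω (x i)) =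
        gaussianReal 0 (∫ t in (0:ℝ)..1, (∑ i, c i * Real.exp (x i * t)) ^ 2).toNNReal := by
  rw [hgauss]
  congr 2
  have : ∀ t : ℝ, (∑ i, c i * Real.exp (x i * t)) ^ 2 =
      ∑ i, ∑ j, c i * c j * Real.exp ((x i + x j) * t) := by
    intro t
    rw [sq, Finset.sum_mul_sum]
    refine Finset.sum_congr rfl fun i _ => Finset.sum_congr rfl fun j _ => ?_
    rw [add_mul, Real.exp_add]; ring
  simp_rw [this]
  rw [intervalIntegral.integral_finsetSum]
  · refine Finset.sum_congr rfl fun i _ => ?_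
    rw [intervalIntegral.integral_finsetSum]
    · refine Finset.sum_congr rfl fun j _ => ?_
      rw [intervalIntegral.integral_const_mul]
    · intro j _
      exact Continuous.intervalIntegrable (by fun_prop) _ _
  · intro i _
    exact Continuous.intervalIntegrable (by fun_prop) _ _

lemma aux_aem {Ω : Type*} [MeasurableSpace Ω] {P : Measure Ω} {X : Ω → ℝ} {v : NNReal}
    (h : P.map X = gaussianReal 0 v) : AEMeasurable X P :=
  aemeasurable_of_map_neZero (by rw [h]; infer_instance)

lemma aux_small {v b : ℝ} (hv : 0 < v) :
    gaussianReal 0 v.toNNReal (Set.Icc (-b) b) ≤ ENNReal.ofReal (2 * b / √v) := by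
  have hv' : v.toNNReal ≠ 0 := by simpa using hv
  rw [gaussianReal_apply _ hv']
  calc ∫⁻ x in Set.Icc (-b) b, gaussianPDF 0 v.toNNReal x
      ≤ ∫⁻ x in Set.Icc (-b) b, ENNReal.ofReal (1 / √v) := by
        refine lintegral_mono fun x => ?_
        rw [gaussianPDF_def]
        refine ENNReal.ofReal_le_ofReal ?_
        rw [gaussianPDFReal_def]
        simp only [Real.coe_toNNReal v hv.le]
        have h1 : (√(2 * π * v))⁻¹ ≤ 1 / √v := by
          rw [one_div]
          refine inv_anti₀ (by positivity) (Real.sqrt_le_sqrt ?_)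
          nlinarith [Real.pi_gt_three]
        have h2 : rexp (-(x - 0) ^ 2 / (2 * v)) ≤ 1 := by
          rw [Real.exp_le_one_iff]
          apply div_nonpos_of_nonpos_of_nonneg
          · nlinarith [sq_nonneg (x - 0)]
          · positivity
        calc _ ≤ (1 / √v) * 1 := by
              apply mul_le_mul h1 h2 (by positivity) (by positivity)
          _ = _ := by ring
    _ = ENNReal.ofReal (2 * b / √v) := by
        rw [setLIntegral_const, Real.volume_Icc, ← ENNReal.ofReal_mul (by positivity)]
        congr 1; ring

lemma aux_mom {Ω : Type*} [MeasurableSpace Ω] {P : Measure Ω} {X : Ω → ℝ} {v : ℝ} (hv : 0 ≤ v)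
    (h : P.map X = gaussianReal 0 v.toNNReal) :
    ∫⁻ ω, ENNReal.ofReal |X ω| ∂P ≤ ENNReal.ofReal (1 + v) := by
  have hX := aux_aem h
  have e1 : ∫⁻ ω, ENNReal.ofReal |X ω| ∂P = ∫⁻ x, ENNReal.ofReal |x| ∂(P.map X) := by
    rw [lintegral_map' (by fun_prop) hX]
  rw [e1, h]
  have hL : MemLp id 2 (gaussianReal 0 v.toNNReal) := memLp_id_gaussianReal' 2 (by simp)
  have hi : Integrable (fun x : ℝ => x ^ 2) (gaussianReal 0 v.toNNReal) := by
    simpa using hL.integrable_sq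
  have hvar : ∫ x, x ^ 2 ∂(gaussianReal 0 v.toNNReal) = v := by
    have := variance_id_gaussianReal (μ := 0) (v := v.toNNReal)
    rw [variance_of_integral_eq_zero (by fun_prop) (by simp)] at this
    simpa [Real.coe_toNNReal v hv] using this
  calc ∫⁻ x, ENNReal.ofReal |x| ∂(gaussianReal 0 v.toNNReal)
      ≤ ∫⁻ x, ENNReal.ofReal (1 + x ^ 2) ∂(gaussianReal 0 v.toNNReal) := by
        refine lintegral_mono fun x => ENNReal.ofReal_le_ofReal ?_
        rw [← sq_abs]
        nlinarith [sq_nonneg (|x| - 1)]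
    _ = ENNReal.ofReal (∫ x, (1 + x ^ 2) ∂(gaussianReal 0 v.toNNReal)) := by
        have hi2 : Integrable (fun x : ℝ => 1 + x ^ 2) (gaussianReal 0 v.toNNReal) :=
          (integrable_const _).add hi
        rw [ofReal_integral_eq_lintegral_ofReal hi2]
        exact Filter.Eventually.of_forall fun x => by positivity
    _ = ENNReal.ofReal (1 + v) := by
        rw [integral_add (integrable_const _) hi, hvar]; simp

lemma aux_indep {Ω : Type*} [MeasurableSpace Ω] {P : Measure Ω} [IsProbabilityMeasure P]
    {X Z : Ω → ℝ} {u v : ℝ} (hu : 0 ≤ u) (hv : 0 ≤ v)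
    (h : ∀ a b : ℝ, P.map (fun ω => a * X ω + b * Z ω) =
      gaussianReal 0 (a ^ 2 * u + b ^ 2 * v).toNNReal) : IndepFun X Z P := by
  have hX : AEMeasurable X P := by simpa using aux_aem (h 1 0)
  have hZ : AEMeasurable Z P := by simpa using aux_aem (h 0 1)
  rw [indepFun_iff_charFunDual_prod hX hZ]
  intro L
  rw [charFunDual_eq_charFun_map_one, charFunDual_eq_charFun_map_one,
    charFunDual_eq_charFun_map_one]
  rw [AEMeasurable.map_map_of_aemeasurable (by fun_prop) (by fun_prop),
    AEMeasurable.map_map_of_aemeasurable (by fun_prop) (by fun_prop),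
    AEMeasurable.map_map_of_aemeasurable (by fun_prop) (by fun_prop)]
  have e : ∀ x z : ℝ, L (x, z) = L (1, 0) * x + L (0, 1) * z := by
    intro x z
    have : ((x, z) : ℝ × ℝ) = x • (1, 0) + z • (0, 1) := by simp
    rw [this, map_add, map_smul, map_smul]; simp [mul_comm]
  have e1 : (L ∘ fun ω => (X ω, Z ω)) = fun ω => L (1, 0) * X ω + L (0, 1) * Z ω := by
    ext ω; exact e _ _
  have e2 : ((L.comp (.inl ℝ ℝ ℝ)) ∘ X) = fun ω => L (1, 0) * X ω + 0 * Z ω := by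
    ext ω; simp [e (X ω) 0]
  have e3 : ((L.comp (.inr ℝ ℝ ℝ)) ∘ Z) = fun ω => 0 * X ω + L (0, 1) * Z ω := by
    ext ω; simp [e 0 (Z ω)]
  rw [e1, e2, e3, h, h, h, charFun_gaussianReal, charFun_gaussianReal, charFun_gaussianReal,
    ← Complex.exp_add]
  congr 1
  rw [Real.coe_toNNReal _ (by positivity), Real.coe_toNNReal _ (by positivity),
    Real.coe_toNNReal _ (by positivity)]
  push_cast; ring

lemma aux_w (δ ρ : ℝ) (hδ : 0 < δ) :
    δ ^ 2 / 16 ≤ ∫ t in (0:ℝ)..1, (rexp (δ * t) - ρ) ^ 2 := by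
  have hc : Continuous fun t : ℝ => (rexp (δ * t) - ρ) ^ 2 := by fun_prop
  have hc2 : Continuous fun t : ℝ => (rexp (δ * (t + 1/2)) - ρ) ^ 2 := by fun_prop
  rw [← intervalIntegral.integral_add_adjacent_intervals (b := 1/2)
    (hc.intervalIntegrable _ _) (hc.intervalIntegrable _ _)]
  have : ∫ t in (1/2:ℝ)..1, (rexp (δ * t) - ρ) ^ 2 =
      ∫ t in (0:ℝ)..(1/2), (rexp (δ * (t + 1/2)) - ρ) ^ 2 := by
    rw [intervalIntegral.integral_comp_add_right (fun t => (rexp (δ * t) - ρ) ^ 2)]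
    norm_num
  rw [this, ← intervalIntegral.integral_add (hc.intervalIntegrable _ _)
    (hc2.intervalIntegrable _ _)]
  calc δ ^ 2 / 16 = ∫ t in (0:ℝ)..(1/2), δ ^ 2 / 8 := by
        rw [intervalIntegral.integral_const]; simp; ring
    _ ≤ _ := by
        refine intervalIntegral.integral_mono_on (by norm_num)
          (continuous_const.intervalIntegrable _ _) ((hc.add hc2).intervalIntegrable _ _) ?_
        intro t ht
        have h1 : 1 ≤ rexp (δ * t) := Real.one_le_exp (mul_nonneg hδ.le ht.1)
        have h2 : 1 + δ / 2 ≤ rexp (δ / 2) := by linarith [Real.add_one_le_exp (δ / 2)]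
        have h3 : rexp (δ * (t + 1/2)) = rexp (δ * t) * rexp (δ / 2) := by
          rw [← Real.exp_add]; ring_nf
        have h4 : rexp (δ * t) + δ / 2 ≤ rexp (δ * (t + 1/2)) := by
          rw [h3]; nlinarith
        have h5 : 0 ≤ rexp (δ * (t + 1/2)) - rexp (δ * t) - δ / 2 := by linarith
        nlinarith [sq_nonneg ((rexp (δ * t) - ρ) + (rexp (δ * (t + 1/2)) - ρ)),
          mul_nonneg h5 h5, mul_nonneg h5 hδ.le]

lemma aux_two {Ω : Type*} [MeasurableSpace Ω] (P : Measure Ω) [IsProbabilityMeasure P]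
    (g : Ω → ℝ → ℝ)
    (hlaw : ∀ (m : ℕ) (c : Fin m → ℝ) (x : Fin m → ℝ),
      P.map (fun ω => ∑ i, c i * g ω (x i)) =
        gaussianReal 0 (∫ t in (0:ℝ)..1, (∑ i, c i * Real.exp (x i * t)) ^ 2).toNNReal)
    (M : ℝ) (hM : 0 < M) (y δ a : ℝ) (hδ : 0 < δ) (hy : -M ≤ y) (hy2 : y + δ ≤ M)
    (ha : 0 ≤ a) :
    P {ω | |g ω y| ≤ a ∧ |g ω (y + δ)| ≤ a} ≤
      ENNReal.ofReal (16 * rexp (2 * M) * (1 + rexp (2 * M)) * a ^ 2 / δ) := by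
  set e1 : ℝ → ℝ := fun t => rexp (y * t) with he1
  set e2 : ℝ → ℝ := fun t => rexp ((y + δ) * t) with he2
  have c1 : Continuous e1 := by fun_prop
  have c2 : Continuous e2 := by fun_prop
  set u := ∫ t in (0:ℝ)..1, (e1 t) ^ 2 with hu
  set r := ∫ t in (0:ℝ)..1, e1 t * e2 t with hr
  set ρ := r / u with hρ
  set w := ∫ t in (0:ℝ)..1, (e2 t - ρ * e1 t) ^ 2 with hw
  have e1low : ∀ t ∈ Set.Icc (0:ℝ) 1, rexp (-(2 * M)) ≤ (e1 t) ^ 2 := by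
    intro t ht
    simp only [he1]
    rw [← Real.exp_nat_mul]
    refine Real.exp_le_exp.2 ?_
    push_cast
    nlinarith [ht.1, ht.2]
  have hulow : rexp (-(2 * M)) ≤ u := by
    calc rexp (-(2 * M)) = ∫ t in (0:ℝ)..1, rexp (-(2 * M)) := by simp
      _ ≤ u := intervalIntegral.integral_mono_on (by norm_num)
          (continuous_const.intervalIntegrable _ _) ((c1.pow 2).intervalIntegrable _ _) e1low
  have hupos : 0 < u := lt_of_lt_of_le (Real.exp_pos _) hulow
  have hr0 : 0 ≤ r := intervalIntegral.integral_nonneg (by norm_num)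
    fun t _ => by simp only [he1, he2]; positivity
  have hrle : r ≤ rexp (2 * M) * u := by
    rw [hu, ← intervalIntegral.integral_const_mul]
    refine intervalIntegral.integral_mono_on (by norm_num)
          ((c1.mul c2).intervalIntegrable _ _)
          ((continuous_const.mul (c1.pow 2)).intervalIntegrable _ _) ?_
    intro t ht
    have : e2 t ≤ rexp (2 * M) * e1 t := by
      simp only [he1, he2]
      rw [← Real.exp_add]
      refine Real.exp_le_exp.2 ?_
      nlinarith [ht.1, ht.2]
    have h0 : 0 ≤ e1 t := (Real.exp_pos _).le
    nlinarith
  have hρ0 : 0 ≤ ρ := div_nonneg hr0 hupos.le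
  have hρle : ρ ≤ rexp (2 * M) := (div_le_iff₀ hupos).2 hrle
  have hwlow : rexp (-(2 * M)) * (δ ^ 2 / 16) ≤ w := by
    calc rexp (-(2 * M)) * (δ ^ 2 / 16)
        ≤ rexp (-(2 * M)) * ∫ t in (0:ℝ)..1, (rexp (δ * t) - ρ) ^ 2 := by
          gcongr; exact aux_w δ ρ hδ
      _ = ∫ t in (0:ℝ)..1, rexp (-(2 * M)) * (rexp (δ * t) - ρ) ^ 2 := by
          rw [intervalIntegral.integral_const_mul]
      _ ≤ w := by
          refine intervalIntegral.integral_mono_on (by norm_num)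
            (Continuous.intervalIntegrable (by fun_prop) _ _)
            (Continuous.intervalIntegrable (by fun_prop) _ _) ?_
          intro t ht
          have : e2 t - ρ * e1 t = e1 t * (rexp (δ * t) - ρ) := by
            simp only [he1, he2]
            rw [add_mul, Real.exp_add]; ring
          rw [this, mul_pow]
          exact mul_le_mul_of_nonneg_right (e1low t ht) (sq_nonneg _)
  have hwpos : 0 < w := lt_of_lt_of_le (by positivity) hwlow
  have hcomb : ∀ p q : ℝ, P.map (fun ω => p * g ω y + q * (g ω (y + δ) - ρ * g ω y)) =
      gaussianReal 0 (p ^ 2 * u + q ^ 2 * w).toNNReal := by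
    intro p q
    have h := hlaw 2 ![p - q * ρ, q] ![y, y + δ]
    simp only [Fin.sum_univ_two, Matrix.cons_val_zero, Matrix.cons_val_one] at h
    convert h using 2
    · ext ω; ring
    · congr 1
      have : ∀ t : ℝ, ((p - q * ρ) * rexp (y * t) + q * rexp ((y + δ) * t)) ^ 2 =
          p ^ 2 * (e1 t) ^ 2 + 2 * p * q * (e1 t * e2 t)  - 2 * p * q * ρ * (e1 t) ^ 2
            + q ^ 2 * (e2 t - ρ * e1 t) ^ 2 := by
        intro t; simp only [he1, he2]; ring
      simp_rw [this]
      rw [intervalIntegral.integral_add, intervalIntegral.integral_sub,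
        intervalIntegral.integral_add]
      · simp only [intervalIntegral.integral_const_mul]
        rw [← hu, ← hr, ← hw]
        have : ρ * u = r := div_mul_cancel₀ _ hupos.ne'
        linear_combination 2 * p * q * this
      all_goals exact Continuous.intervalIntegrable (by fun_prop) _ _
  have hind := aux_indep hupos.le hwpos.le hcomb
  have hX : P.map (fun ω => g ω y) = gaussianReal 0 u.toNNReal := by simpa using hcomb 1 0
  have hZ : P.map (fun ω => g ω (y + δ) - ρ * g ω y) = gaussianReal 0 w.toNNReal := by
    simpa using hcomb 0 1
  have hsub : {ω | |g ω y| ≤ a ∧ |g ω (y + δ)| ≤ a} ⊆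
      (fun ω => g ω y) ⁻¹' Set.Icc (-a) a ∩
      (fun ω => g ω (y + δ) - ρ * g ω y) ⁻¹' Set.Icc (-((1 + ρ) * a)) ((1 + ρ) * a) := by
    rintro ω ⟨h1, h2⟩
    refine ⟨abs_le.1 h1, abs_le.1 ?_⟩
    calc |g ω (y + δ) - ρ * g ω y| ≤ |g ω (y + δ)| + |ρ * g ω y| := abs_sub _ _
      _ = |g ω (y + δ)| + ρ * |g ω y| := by rw [abs_mul, abs_of_nonneg hρ0]
      _ ≤ a + ρ * a := by gcongr
      _ = (1 + ρ) * a := by ring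
  refine (measure_mono hsub).trans ?_
  rw [hind.measure_inter_preimage_eq_mul _ _ measurableSet_Icc measurableSet_Icc,
    ← Measure.map_apply_of_aemeasurable (aux_aem hX) measurableSet_Icc,
    ← Measure.map_apply_of_aemeasurable (aux_aem hZ) measurableSet_Icc, hX, hZ]
  refine (mul_le_mul' (aux_small hupos) (aux_small hwpos)).trans ?_
  rw [← ENNReal.ofReal_mul (by positivity)]
  refine ENNReal.ofReal_le_ofReal ?_
  have s1 : rexp (-M) ≤ √u := by
    refine Real.le_sqrt_of_sq_le ?_
    rw [← Real.exp_nat_mul]; convert hulow using 2; push_cast; ring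
  have s2 : rexp (-M) * (δ / 4) ≤ √w := by
    refine Real.le_sqrt_of_sq_le ?_
    rw [mul_pow, ← Real.exp_nat_mul]; convert hwlow using 2
    · congr 1; push_cast; ring
    · ring
  calc 2 * a / √u * (2 * ((1 + ρ) * a) / √w)
      ≤ 2 * a / rexp (-M) * (2 * ((1 + rexp (2 * M)) * a) / (rexp (-M) * (δ / 4))) := by
        gcongr
    _ = _ := by
        rw [Real.exp_neg, two_mul M, Real.exp_add]
        field_simp
        ring

noncomputable def auxD2 (f : ℝ → ℝ) (a h : ℝ) : ℝ := (f (a + 2 * h) - 2 * f (a + h) + f a) / h ^ 2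

noncomputable def auxD3 (f : ℝ → ℝ) (a h : ℝ) : ℝ :=
  (f (a + 3 * h) - 3 * f (a + 2 * h) + 3 * f (a + h) - f a) / h ^ 3

noncomputable def auxH (M : ℝ) (n : ℕ) : ℝ := 2 * M / ((n : ℝ) + 1)

noncomputable def auxW (M : ℝ) (n : ℕ) (f : ℝ → ℝ) : ℝ :=
  |auxD2 f (-M) (auxH M n)| +
    ∑ j ∈ Finset.range (n + 1), auxH M n * |auxD3 f (-M + j * auxH M n) (auxH M n)|

lemma auxH_pos {M : ℝ} (hM : 0 < M) (n : ℕ) : 0 < auxH M n := by unfold auxH; positivity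

lemma aux_chain (f : ℝ → ℝ) (a h : ℝ) (hh : 0 < h) (k : ℕ) :
    |auxD2 f (a + k * h) h| ≤
      |auxD2 f a h| + ∑ j ∈ Finset.range k, h * |auxD3 f (a + j * h) h| := by
  induction k with
  | zero => simp
  | succ k ih =>
    rw [Finset.sum_range_succ]
    have : auxD2 f (a + (k + 1 : ℕ) * h) h =
        auxD2 f (a + k * h) h + h * auxD3 f (a + k * h) h := by
      unfold auxD2 auxD3
      have e1 : a + ((k + 1 : ℕ) : ℝ) * h + 2 * h = a + k * h + 3 * h := by push_cast; ring
      have e2 : a + ((k + 1 : ℕ) : ℝ) * h + h = a + k * h + 2 * h := by push_cast; ring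
      have e3 : a + ((k + 1 : ℕ) : ℝ) * h = a + k * h + h := by push_cast; ring
      rw [e1, e2, e3]
      field_simp
      ring
    rw [this]
    calc _ ≤ |auxD2 f (a + k * h) h| + |h * auxD3 f (a + k * h) h| := abs_add_le _ _
      _ = |auxD2 f (a + k * h) h| + h * |auxD3 f (a + k * h) h| := by
        rw [abs_mul, abs_of_pos hh]
      _ ≤ _ := by linarith

lemma aux_mvt (f : ℝ → ℝ) (hf : ContDiff ℝ (⊤ : ℕ∞) f) (a h : ℝ) (hh : 0 < h) :
    ∃ ξ ∈ Set.Icc a (a + 2 * h), auxD2 f a h = deriv (deriv f) ξ := by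
  have hd : Differentiable ℝ f := hf.differentiable (by simp)
  have hf' : ContDiff ℝ (⊤ : ℕ∞) (deriv f) := by
    have := contDiff_infty_iff_deriv.1 hf
    exact this.2
  have hd' : Differentiable ℝ (deriv f) := hf'.differentiable (by simp)
  have hφ : ∀ s, HasDerivAt (fun s => f (s + h) - f s) (deriv f (s + h) - deriv f s) s := by
    intro s
    exact ((hd (s + h)).hasDerivAt.comp_add_const s h).sub (hd s).hasDerivAt
  obtain ⟨s, hs, es⟩ := exists_hasDerivAt_eq_slope (fun s => f (s + h) - f s)
    (fun s => deriv f (s + h) - deriv f s) (show a < a + h by linarith)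
    (fun s _ => (hφ s).continuousAt.continuousWithinAt) (fun s _ => hφ s)
  obtain ⟨ξ, hξ, eξ⟩ := exists_deriv_eq_slope (deriv f) (show s < s + h by linarith)
    hd'.continuous.continuousOn hd'.differentiableOn
  refine ⟨ξ, ⟨by linarith [hs.1, hξ.1], by linarith [hs.2, hξ.2]⟩, ?_⟩
  rw [eξ, es]
  unfold auxD2
  have : a + h + h = a + 2 * h := by ring
  rw [this]
  have h1 : a + h - a = h := by ring
  have h2 : s + h - s = h := by ring
  rw [h1, h2]
  field_simp
  ring

lemma aux_lim (f : ℝ → ℝ) (hf : ContDiff ℝ (⊤ : ℕ∞) f) (M : ℝ) (hM : 0 < M) (x : ℝ)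
    (hx : x ∈ Set.Icc (-M) M) :
    ENNReal.ofReal |deriv (deriv f) x| ≤
      Filter.liminf (fun n => ENNReal.ofReal (auxW M n f)) Filter.atTop := by
  have hf' : ContDiff ℝ (⊤ : ℕ∞) (deriv f) := (contDiff_infty_iff_deriv.1 hf).2
  have hf'' : Continuous (deriv (deriv f)) := (contDiff_infty_iff_deriv.1 hf').2.continuous
  have key : ∀ n : ℕ, ∃ ξ : ℝ, |ξ - x| ≤ 2 * auxH M n ∧ |deriv (deriv f) ξ| ≤ auxW M n f := by
    intro n
    have hh := auxH_pos hM n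
    set h := auxH M n with hh_def
    set k := ⌊(x + M) / h⌋₊ with hk
    have hnn : 0 ≤ (x + M) / h := div_nonneg (by linarith [hx.1]) hh.le
    have k1 : (k : ℝ) * h ≤ x + M := by
      have := Nat.floor_le hnn
      rwa [le_div_iff₀ hh] at this
    have k2 : x + M < (k + 1) * h := by
      have := Nat.lt_floor_add_one ((x + M) / h)
      rwa [div_lt_iff₀ hh] at this
    have k3 : k ≤ n + 1 := by
      have e : ((n : ℝ) + 1) * h = 2 * M := by
        rw [hh_def]; unfold auxH; field_simp
      have : (k : ℝ) * h ≤ ((n : ℝ) + 1) * h := by linarith [hx.2]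
      have := le_of_mul_le_mul_right this hh
      exact_mod_cast this
    obtain ⟨ξ, hξ, e⟩ := aux_mvt f hf (-M + k * h) h hh
    refine ⟨ξ, abs_le.2 ⟨by nlinarith [hξ.1], by nlinarith [hξ.2]⟩, ?_⟩
    rw [← e]
    refine (aux_chain f (-M) h hh k).trans ?_
    unfold auxW
    rw [← hh_def]
    gcongr
  choose ξ h1 h2 using key
  have hH : Filter.Tendsto (fun n => 2 * auxH M n) Filter.atTop (nhds 0) := by
    have h0 := (tendsto_one_div_add_atTop_nhds_zero_nat (𝕜 := ℝ)).const_mul (4 * M)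
    rw [mul_zero] at h0
    refine h0.congr fun n => ?_
    unfold auxH; ring
  have hξ : Filter.Tendsto ξ Filter.atTop (nhds x) := by
    rw [tendsto_iff_norm_sub_tendsto_zero]
    exact squeeze_zero (fun _ => norm_nonneg _) h1 hH
  have hlim : Filter.Tendsto (fun n => ENNReal.ofReal |deriv (deriv f) (ξ n)|) Filter.atTop
      (nhds (ENNReal.ofReal |deriv (deriv f) x|)) :=
    ENNReal.tendsto_ofReal (((hf''.tendsto x).comp hξ).abs)
  rw [← hlim.liminf_eq]
  exact Filter.liminf_le_liminf
    (Filter.Eventually.of_forall fun n => ENNReal.ofReal_le_ofReal (h2 n))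

lemma aux_E (M : ℝ) (hM : 0 < M) (h t : ℝ) (hh : 0 < h) (hh2 : h ≤ 2 * M)
    (ht : t ∈ Set.Icc (0:ℝ) 1) : 0 ≤ (rexp (h * t) - 1) / h ∧
      (rexp (h * t) - 1) / h ≤ rexp (2 * M) := by
  have h0 : 0 ≤ h * t := mul_nonneg hh.le ht.1
  have h1 : 1 ≤ rexp (h * t) := Real.one_le_exp h0
  refine ⟨div_nonneg (by linarith) hh.le, ?_⟩
  rw [div_le_iff₀ hh]
  have h2 : 1 - h * t ≤ rexp (-(h * t)) := by linarith [Real.add_one_le_exp (-(h * t))]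
  have h3 : rexp (h * t) * rexp (-(h * t)) = 1 := by rw [← Real.exp_add]; simp
  have h4 : rexp (h * t) - 1 ≤ h * t * rexp (h * t) := by nlinarith
  have h5 : rexp (h * t) ≤ rexp (2 * M) := Real.exp_le_exp.2 (by nlinarith [ht.1, ht.2])
  have h6 : h * t ≤ h := by nlinarith [ht.2]
  calc rexp (h * t) - 1 ≤ h * t * rexp (h * t) := h4
    _ ≤ h * rexp (2 * M) := by gcongr
    _ = _ := by ring

section
variable {Ω : Type*} [MeasurableSpace Ω] (P : Measure Ω) [IsProbabilityMeasure P]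
    (g : Ω → ℝ → ℝ)
    (hlaw : ∀ (m : ℕ) (c : Fin m → ℝ) (x : Fin m → ℝ),
      P.map (fun ω => ∑ i, c i * g ω (x i)) =
        gaussianReal 0 (∫ t in (0:ℝ)..1, (∑ i, c i * Real.exp (x i * t)) ^ 2).toNNReal)
    (M : ℝ) (hM : 0 < M)

include hlaw hM

omit [IsProbabilityMeasure P] in
lemma aux_mD (p : ℕ) (hp : p ≤ 3) (m : ℕ) (c : Fin m → ℝ) (x : Fin m → ℝ) (a h : ℝ)
    (ha : a ≤ M) (hh : 0 < h) (hh2 : h ≤ 2 * M)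
    (he : ∀ t, ∑ i, c i * Real.exp (x i * t) = rexp (a * t) * ((rexp (h * t) - 1) / h) ^ p) :
    ∫⁻ ω, ENNReal.ofReal |∑ i, c i * g ω (x i)| ∂P ≤ ENNReal.ofReal (1 + rexp (14 * M)) := by
  have h0 := hlaw m c x
  have hv0 : 0 ≤ ∫ t in (0:ℝ)..1, (∑ i, c i * Real.exp (x i * t)) ^ 2 :=
    intervalIntegral.integral_nonneg (by norm_num) fun t _ => sq_nonneg _
  refine (aux_mom hv0 h0).trans (ENNReal.ofReal_le_ofReal ?_)
  gcongr
  calc ∫ t in (0:ℝ)..1, (∑ i, c i * Real.exp (x i * t)) ^ 2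
      ≤ ∫ t in (0:ℝ)..1, rexp (14 * M) := by
        refine intervalIntegral.integral_mono_on (by norm_num)
          (Continuous.intervalIntegrable (by fun_prop) _ _)
          (Continuous.intervalIntegrable (by fun_prop) _ _) ?_
        intro t ht
        rw [he t]
        obtain ⟨q1, q2⟩ := aux_E M hM h t hh hh2 ht
        have q3 : rexp (a * t) ≤ rexp M := Real.exp_le_exp.2 (by nlinarith [ht.1, ht.2])
        have q4 : ((rexp (h * t) - 1) / h) ^ p ≤ rexp (2 * M) ^ 3 := by
          calc _ ≤ rexp (2 * M) ^ p := by gcongr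
            _ ≤ rexp (2 * M) ^ 3 := by
              gcongr
              exact Real.one_le_exp (by linarith)
        calc (rexp (a * t) * ((rexp (h * t) - 1) / h) ^ p) ^ 2
            ≤ (rexp M * rexp (2 * M) ^ 3) ^ 2 := by gcongr
          _ = rexp (14 * M) := by
            rw [← Real.exp_nat_mul, ← Real.exp_add, ← Real.exp_nat_mul]
            congr 1; push_cast; ring
    _ = rexp (14 * M) := by simp

omit [IsProbabilityMeasure P] in
lemma aux_D2 (a h : ℝ) (ha : a ≤ M) (hh : 0 < h) (hh2 : h ≤ 2 * M) :
    AEMeasurable (fun ω => auxD2 (g ω) a h) P ∧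
    ∫⁻ ω, ENNReal.ofReal |auxD2 (g ω) a h| ∂P ≤ ENNReal.ofReal (1 + rexp (14 * M)) := by
  have e : ∀ ω, auxD2 (g ω) a h =
      ∑ i, ![1 / h ^ 2, -2 / h ^ 2, 1 / h ^ 2] i * g ω (![a, a + h, a + 2 * h] i) := by
    intro ω
    simp [Fin.sum_univ_succ, auxD2]; ring
  simp_rw [e]
  refine ⟨aux_aem (hlaw _ _ _), aux_mD P g hlaw M hM 2 (by norm_num) _ _ _ a h ha hh hh2 ?_⟩
  intro t
  have e1 : rexp ((a + h) * t) = rexp (a * t) * rexp (h * t) := by rw [← Real.exp_add]; ring_nf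
  have e2 : rexp ((a + 2 * h) * t) = rexp (a * t) * rexp (h * t) ^ 2 := by
    rw [← Real.exp_nat_mul, ← Real.exp_add]; push_cast; ring_nf
  simp [Fin.sum_univ_succ, e1, e2]; ring

omit [IsProbabilityMeasure P] in
lemma aux_D3 (a h : ℝ) (ha : a ≤ M) (hh : 0 < h) (hh2 : h ≤ 2 * M) :
    AEMeasurable (fun ω => auxD3 (g ω) a h) P ∧
    ∫⁻ ω, ENNReal.ofReal |auxD3 (g ω) a h| ∂P ≤ ENNReal.ofReal (1 + rexp (14 * M)) := by
  have e : ∀ ω, auxD3 (g ω) a h =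
      ∑ i, ![-1 / h ^ 3, 3 / h ^ 3, -3 / h ^ 3, 1 / h ^ 3] i *
        g ω (![a, a + h, a + 2 * h, a + 3 * h] i) := by
    intro ω
    simp [Fin.sum_univ_succ, auxD3]; ring
  simp_rw [e]
  refine ⟨aux_aem (hlaw _ _ _), aux_mD P g hlaw M hM 3 (by norm_num) _ _ _ a h ha hh hh2 ?_⟩
  intro t
  have e1 : rexp ((a + h) * t) = rexp (a * t) * rexp (h * t) := by rw [← Real.exp_add]; ring_nf
  have e2 : rexp ((a + 2 * h) * t) = rexp (a * t) * rexp (h * t) ^ 2 := by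
    rw [← Real.exp_nat_mul, ← Real.exp_add]; push_cast; ring_nf
  have e3 : rexp ((a + 3 * h) * t) = rexp (a * t) * rexp (h * t) ^ 3 := by
    rw [← Real.exp_nat_mul, ← Real.exp_add]; push_cast; ring_nf
  simp [Fin.sum_univ_succ, e1, e2, e3]; ring

omit [IsProbabilityMeasure P] in
lemma aux_W (n : ℕ) : AEMeasurable (fun ω => auxW M n (g ω)) P ∧
    ∫⁻ ω, ENNReal.ofReal (auxW M n (g ω)) ∂P ≤
      ENNReal.ofReal ((1 + 2 * M) * (1 + rexp (14 * M))) := by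
  have hh := auxH_pos hM n
  have hh2 : auxH M n ≤ 2 * M := by
    unfold auxH
    refine div_le_self (by linarith) ?_
    have : (0:ℝ) ≤ n := Nat.cast_nonneg n
    linarith
  have hN : ((n : ℝ) + 1) * auxH M n = 2 * M := by unfold auxH; field_simp
  have m2 := aux_D2 P g hlaw M hM (-M) (auxH M n) (by linarith) hh hh2
  have m3 : ∀ j ∈ Finset.range (n + 1), _ := fun j hj =>
    aux_D3 P g hlaw M hM (-M + j * auxH M n) (auxH M n) (by
      have : (j : ℝ) ≤ n + 1 := by exact_mod_cast (Finset.mem_range.1 hj).le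
      nlinarith) hh hh2
  have a2 : AEMeasurable (fun ω => |auxD2 (g ω) (-M) (auxH M n)|) P := by
    simpa [Real.norm_eq_abs] using m2.1.norm
  have a3 : ∀ j ∈ Finset.range (n + 1), AEMeasurable
      (fun ω => auxH M n * |auxD3 (g ω) (-M + j * auxH M n) (auxH M n)|) P := fun j hj => by
    simpa [Real.norm_eq_abs] using (m3 j hj).1.norm.const_mul (auxH M n)
  refine ⟨?_, ?_⟩
  · unfold auxW
    exact a2.add (Finset.aemeasurable_fun_sum _ a3)
  · have e : ∀ ω, ENNReal.ofReal (auxW M n (g ω)) =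
        ENNReal.ofReal |auxD2 (g ω) (-M) (auxH M n)| + ∑ j ∈ Finset.range (n + 1),
          ENNReal.ofReal (auxH M n * |auxD3 (g ω) (-M + j * auxH M n) (auxH M n)|) := by
      intro ω
      unfold auxW
      rw [ENNReal.ofReal_add (abs_nonneg _) (Finset.sum_nonneg fun j _ => by positivity),
        ENNReal.ofReal_sum_of_nonneg (fun j _ => by positivity)]
    simp_rw [e]
    rw [lintegral_add_left' a2.ennreal_ofReal,
      lintegral_finsetSum' _ (fun j hj => (a3 j hj).ennreal_ofReal)]
    have b3 : ∀ j ∈ Finset.range (n + 1), ∫⁻ ω, ENNReal.ofReal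
        (auxH M n * |auxD3 (g ω) (-M + j * auxH M n) (auxH M n)|) ∂P ≤
        ENNReal.ofReal (auxH M n * (1 + rexp (14 * M))) := by
      intro j hj
      simp_rw [ENNReal.ofReal_mul hh.le]
      rw [lintegral_const_mul' _ _ ENNReal.ofReal_ne_top]
      gcongr
      exact (m3 j hj).2
    refine (add_le_add m2.2 (Finset.sum_le_sum b3)).trans ?_
    rw [← ENNReal.ofReal_sum_of_nonneg (fun j _ => by positivity),
      ← ENNReal.ofReal_add (by positivity) (Finset.sum_nonneg fun j _ => by positivity)]
    refine ENNReal.ofReal_le_ofReal (le_of_eq ?_)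
    rw [Finset.sum_const, Finset.card_range, nsmul_eq_mul]
    push_cast
    linear_combination (1 + rexp (14 * M)) * hN

omit [IsProbabilityMeasure P] in
lemma aux_tail (hsmooth : ∀ᵐ ω ∂P, ContDiff ℝ (⊤ : ℕ∞) (g ω)) (T : ℝ) (hT : 0 < T) :
    P {ω | ∃ x ∈ Set.Icc (-M) M, T ≤ |deriv (deriv (g ω)) x|} ≤
      ENNReal.ofReal ((1 + 2 * M) * (1 + rexp (14 * M)) / T) := by
  set F : Ω → ℝ≥0∞ := fun ω =>
    Filter.liminf (fun n => ENNReal.ofReal (auxW M n (g ω))) Filter.atTop with hF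
  have hm : ∀ n, AEMeasurable (fun ω => ENNReal.ofReal (auxW M n (g ω))) P :=
    fun n => (aux_W P g hlaw M hM n).1.ennreal_ofReal
  have h1 : P {ω | ∃ x ∈ Set.Icc (-M) M, T ≤ |deriv (deriv (g ω)) x|} ≤
      P {ω | ENNReal.ofReal T ≤ F ω} := by
    refine measure_mono_ae ?_
    filter_upwards [hsmooth] with ω hω
    rintro ⟨x, hx, hTx⟩
    exact (ENNReal.ofReal_le_ofReal hTx).trans (aux_lim (g ω) hω M hM x hx)
  have hFm : AEMeasurable F P := by
    refine ⟨fun ω => Filter.liminf (fun n => (hm n).mk _ ω) Filter.atTop,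
      Measurable.liminf fun n => (hm n).measurable_mk, ?_⟩
    filter_upwards [ae_all_iff.2 fun n => (hm n).ae_eq_mk] with ω hω
    simp only [hF]
    congr 1
    funext n
    exact hω n
  have h2 : ∫⁻ ω, F ω ∂P ≤ ENNReal.ofReal ((1 + 2 * M) * (1 + rexp (14 * M))) := by
    refine (lintegral_liminf_le' hm).trans ?_
    refine (Filter.liminf_le_liminf (Filter.Eventually.of_forall
      fun n => (aux_W P g hlaw M hM n).2)).trans ?_
    simp
  have h3 := meas_ge_le_lintegral_div hFm (ε := ENNReal.ofReal T) (by simpa using hT)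
    ENNReal.ofReal_ne_top
  refine h1.trans (h3.trans ?_)
  rw [ENNReal.ofReal_div_of_pos hT]
  gcongr

end

lemma aux_taylor (f : ℝ → ℝ) (hf : ContDiff ℝ (⊤ : ℕ∞) f) (M G δ : ℝ) (hG : 0 ≤ G) (x y : ℝ)
    (hx : x ∈ Set.Icc (-M) M) (hy : y ∈ Set.Icc (-M) M) (hxy : |y - x| ≤ δ)
    (h : ∀ z ∈ Set.Icc (-M) M, |deriv (deriv f) z| ≤ G) :
    |f y| ≤ |f x| + (|deriv f x| + G * δ) * δ := by
  have hd : Differentiable ℝ f := hf.differentiable (by simp)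
  have hf' : ContDiff ℝ (⊤ : ℕ∞) (deriv f) := (contDiff_infty_iff_deriv.1 hf).2
  have hd' : Differentiable ℝ (deriv f) := hf'.differentiable (by simp)
  have hsub : Set.uIcc x y ⊆ Set.Icc (-M) M := Set.uIcc_subset_Icc hx hy
  have hδ : 0 ≤ δ := (abs_nonneg _).trans hxy
  have b1 : ∀ z ∈ Set.uIcc x y, |deriv f z| ≤ |deriv f x| + G * δ := by
    intro z hz
    have := (convex_Icc (-M) M).norm_image_sub_le_of_norm_deriv_le (f := deriv f) (C := G)
      (fun w _ => hd' w) (fun w hw => h w hw) hx (hsub hz)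
    simp only [Real.norm_eq_abs] at this
    have hz' : |z - x| ≤ |y - x| := Set.abs_sub_left_of_mem_uIcc hz
    have h2 : |deriv f z| ≤ |deriv f x| + |deriv f z - deriv f x| := by
      have := abs_add_le (deriv f x) (deriv f z - deriv f x)
      simpa using this
    have h3 : G * |z - x| ≤ G * δ := by gcongr; linarith
    linarith
  have := (convex_uIcc x y).norm_image_sub_le_of_norm_deriv_le (f := f)
    (C := |deriv f x| + G * δ) (fun w _ => hd w) (fun w hw => b1 w hw)
    Set.left_mem_uIcc Set.right_mem_uIcc
  simp only [Real.norm_eq_abs] at this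
  have h2 : |f y| ≤ |f x| + |f y - f x| := by
    have := abs_add_le (f x) (f y - f x)
    simpa using this
  have h3 : (|deriv f x| + G * δ) * |y - x| ≤ (|deriv f x| + G * δ) * δ := by gcongr
  linarith

theorem g_and_g_deriv_not_simultaneously_small
    {Ω : Type*} [MeasurableSpace Ω] (P : Measure Ω) [IsProbabilityMeasure P]
    (g : Ω → ℝ → ℝ)
    (hsmooth : ∀ᵐ ω ∂P, ContDiff ℝ (⊤ : ℕ∞) (g ω))
    (hgauss : ∀ (m : ℕ) (c : Fin m → ℝ) (x : Fin m → ℝ),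
      P.map (fun ω => ∑ i, c i * g ω (x i)) =
        gaussianReal 0
          (∑ i, ∑ j, c i * c j *
            ∫ t in (0:ℝ)..1, Real.exp ((x i + x j) * t)).toNNReal)
    (M : ℝ) (hM : 0 < M) :
    ∃ C > (0:ℝ), ∃ ε₀ > (0:ℝ), ∀ ε : ℝ, 0 < ε → ε ≤ ε₀ →
      P {ω | ∃ x ∈ Set.Icc (-M) M,
          |g ω x| ≤ ε ∧ |deriv (g ω) x| ≤ ε ^ ((1:ℝ)/4)}
        ≤ ENNReal.ofReal (C * ε ^ ((1:ℝ)/8)) := by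
  have hlaw := aux_law P g hgauss
  set K := (1 + 2 * M) * (1 + rexp (14 * M)) with hK
  set L := 16 * rexp (2 * M) * (1 + rexp (2 * M)) with hL
  have hKpos : 0 < K := by positivity
  have hLpos : 0 < L := by positivity
  refine ⟨K + L * 9 * (2 * M + 1) ^ 2 / (2 * M), by positivity, 1, one_pos, ?_⟩
  intro ε hε hε1
  set s := ε ^ ((1:ℝ)/8) with hs
  have hs0 : 0 < s := Real.rpow_pos_of_pos hε _
  have hs1 : s ≤ 1 := Real.rpow_le_one hε.le hε1 (by norm_num)
  have hs8 : ε = s ^ 8 := by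
    rw [hs, ← Real.rpow_natCast, ← Real.rpow_mul hε.le]; norm_num
  have hs2 : ε ^ ((1:ℝ)/4) = s ^ 2 := by
    rw [hs, ← Real.rpow_natCast, ← Real.rpow_mul hε.le]; norm_num
  rw [hs2]
  set N := ⌈2 * M / s ^ 6⌉₊ with hN
  have hNlow : 2 * M / s ^ 6 ≤ N := Nat.le_ceil _
  have hNpos : (0:ℝ) < N := lt_of_lt_of_le (by positivity) hNlow
  have hNup : (N : ℝ) * s ^ 6 ≤ 2 * M + 1 := by
    have h1 : (N : ℝ) < 2 * M / s ^ 6 + 1 := Nat.ceil_lt_add_one (by positivity)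
    have h2 : s ^ 6 ≤ 1 := pow_le_one₀ hs0.le hs1
    calc (N : ℝ) * s ^ 6 ≤ (2 * M / s ^ 6 + 1) * s ^ 6 := by gcongr
      _ = 2 * M + s ^ 6 := by field_simp
      _ ≤ _ := by linarith
  set δ := 2 * M / (N : ℝ) with hδ
  have hδ0 : 0 < δ := by positivity
  have hNδ : (N : ℝ) * δ = 2 * M := by rw [hδ]; field_simp
  have hδle : δ ≤ s ^ 6 := by
    rw [hδ, div_le_iff₀ hNpos]
    rw [div_le_iff₀ (by positivity)] at hNlow
    linarith
  have hsub : ∀ᵐ ω ∂P, ω ∈ {ω | ∃ x ∈ Set.Icc (-M) M,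
      |g ω x| ≤ ε ∧ |deriv (g ω) x| ≤ s ^ 2} → ω ∈
      {ω | ∃ x ∈ Set.Icc (-M) M, 1 / s ≤ |deriv (deriv (g ω)) x|} ∪
      ⋃ k ∈ Finset.range N, {ω | |g ω (-M + k * δ)| ≤ 3 * s ^ 8 ∧
        |g ω (-M + k * δ + δ)| ≤ 3 * s ^ 8} := by
    filter_upwards [hsmooth] with ω hω
    rintro ⟨x, hx, hx1, hx2⟩
    by_cases hG : ∃ x ∈ Set.Icc (-M) M, 1 / s ≤ |deriv (deriv (g ω)) x|
    · exact Or.inl hG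
    right
    push Not at hG
    have hG' : ∀ z ∈ Set.Icc (-M) M, |deriv (deriv (g ω)) z| ≤ 1 / s := fun z hz => (hG z hz).le
    have hval : ∀ y ∈ Set.Icc (-M) M, |y - x| ≤ δ → |g ω y| ≤ 3 * s ^ 8 := by
      intro y hy hyx
      refine (aux_taylor (g ω) hω M (1 / s) (s ^ 6) (by positivity) x y hx hy
        (hyx.trans hδle) hG').trans ?_
      have e : 1 / s * s ^ 6 = s ^ 5 := by field_simp
      rw [e]
      have h5 : s ^ 5 ≤ s ^ 2 := pow_le_pow_of_le_one hs0.le hs1 (by norm_num)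
      calc |g ω x| + (|deriv (g ω) x| + s ^ 5) * s ^ 6 ≤ s ^ 8 + (s ^ 2 + s ^ 2) * s ^ 6 := by
            gcongr; exact hx1.trans hs8.le
        _ = 3 * s ^ 8 := by ring
    -- find the cell
    have hcell : ∃ k < N, -M + k * δ ≤ x ∧ x ≤ -M + k * δ + δ := by
      have hN1 : 1 ≤ N := by exact_mod_cast hNpos
      by_cases hxM : x = M
      · refine ⟨N - 1, by omega, ?_⟩
        rw [Nat.cast_sub hN1]
        push_cast
        constructor <;> nlinarith
      · have hlt : x < M := lt_of_le_of_ne hx.2 hxM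
        have hnn : 0 ≤ (x + M) / δ := div_nonneg (by linarith [hx.1]) hδ0.le
        have k1 := Nat.floor_le hnn
        rw [le_div_iff₀ hδ0] at k1
        have k2 := Nat.lt_floor_add_one ((x + M) / δ)
        rw [div_lt_iff₀ hδ0] at k2
        refine ⟨⌊(x + M) / δ⌋₊, ?_, by linarith, by linarith⟩
        rw [Nat.floor_lt hnn, div_lt_iff₀ hδ0]
        linarith
    obtain ⟨k, hk, hk1, hk2⟩ := hcell
    have hkN : ((k : ℝ) + 1) * δ ≤ 2 * M := by
      rw [← hNδ]
      have : (k : ℝ) + 1 ≤ N := by exact_mod_cast hk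
      gcongr
    have hk0 : 0 ≤ (k : ℝ) * δ := by positivity
    simp only [Set.mem_iUnion]
    refine ⟨k, Finset.mem_range.2 hk, hval _ ⟨by linarith, by linarith⟩ ?_,
      hval _ ⟨by linarith, by linarith⟩ ?_⟩
    · rw [abs_le]; constructor <;> linarith
    · rw [abs_le]; constructor <;> linarith
  refine (measure_mono_ae hsub).trans ((measure_union_le _ _).trans ?_)
  have t1 := aux_tail P g hlaw M hM hsmooth (1 / s) (by positivity)
  have t2 : P (⋃ k ∈ Finset.range N, {ω | |g ω (-M + k * δ)| ≤ 3 * s ^ 8 ∧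
        |g ω (-M + k * δ + δ)| ≤ 3 * s ^ 8}) ≤
      ENNReal.ofReal (N * (L * (3 * s ^ 8) ^ 2 / δ)) := by
    refine (measure_biUnion_finset_le _ _).trans ?_
    calc _ ≤ ∑ k ∈ Finset.range N, ENNReal.ofReal (L * (3 * s ^ 8) ^ 2 / δ) := by
          refine Finset.sum_le_sum fun k hk => ?_
          have hkN : ((k : ℝ) + 1) * δ ≤ 2 * M := by
            rw [← hNδ]
            have : (k : ℝ) + 1 ≤ N := by exact_mod_cast Finset.mem_range.1 hk
            gcongr
          have hk0 : 0 ≤ (k : ℝ) * δ := by positivity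
          exact aux_two P g hlaw M hM (-M + k * δ) δ (3 * s ^ 8) hδ0 (by linarith) (by linarith)
            (by positivity)
      _ = _ := by
          rw [Finset.sum_const, Finset.card_range, nsmul_eq_mul,
            ENNReal.ofReal_mul (Nat.cast_nonneg _), ENNReal.ofReal_natCast]
  refine (add_le_add t1 t2).trans ?_
  rw [← ENNReal.ofReal_add (by positivity) (by positivity)]
  refine ENNReal.ofReal_le_ofReal ?_
  have e1 : (N : ℝ) * (L * (3 * s ^ 8) ^ 2 / δ) =
      L * 9 * (N * s ^ 6) ^ 2 / (2 * M) * s ^ 4 := by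
    rw [hδ]; field_simp; ring
  rw [e1]
  have e2 : s ^ 4 ≤ s := by
    calc s ^ 4 ≤ s ^ 1 := pow_le_pow_of_le_one hs0.le hs1 (by norm_num)
      _ = s := pow_one s
  have e3 : L * 9 * (N * s ^ 6) ^ 2 / (2 * M) * s ^ 4 ≤
      L * 9 * (2 * M + 1) ^ 2 / (2 * M) * s := by gcongr
  have e4 : (1 + 2 * M) * (1 + rexp (14 * M)) / (1 / s) = K * s := by
    rw [hK]; field_simp
  rw [e4, add_mul]
  linarith
end

section
/- Let X and Y be independent nonnegative-integer-valued random variables such that X + Y has a Poisson distribution. If X is not Poisson distributed (and not almost surely constant), then this yields a contradiction; equivalently, if X is not a (possibly shifted) Poisson variable then X + Y is not Poisson. Consequently: if ν and ν̃ are independent point processes and there is an interval I such that ν(I) is not Poisson distributed, then (ν + ν̃)(I) is not Poisson distributed. -/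
open MeasureTheory ProbabilityTheory
open scoped NNReal

lemma rk_fps (a : ℕ → ℂ) (ha : ∀ z : ℂ, Summable fun n => ‖a n * z ^ n‖) :
    HasFPowerSeriesOnBall (fun z => ∑' n, a n * z ^ n)
      (FormalMultilinearSeries.ofScalars ℂ a) 0 ⊤ := by
  have hr : (FormalMultilinearSeries.ofScalars ℂ a).radius = ⊤ := by
    apply FormalMultilinearSeries.radius_eq_top_of_summable_norm
    intro r
    have := ha (r : ℂ)
    simpa [FormalMultilinearSeries.ofScalars_norm] using this
  have h := (FormalMultilinearSeries.ofScalars ℂ a).hasFPowerSeriesOnBall (by rw [hr]; simp)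
  rw [hr] at h
  refine h.congr ?_
  intro z _
  change FormalMultilinearSeries.ofScalarsSum a z = _
  rw [FormalMultilinearSeries.ofScalars_sum_eq]
  simp

lemma rk_diff (a : ℕ → ℂ) (ha : ∀ z : ℂ, Summable fun n => ‖a n * z ^ n‖) :
    Differentiable ℂ (fun z => ∑' n, a n * z ^ n) := by
  have := (rk_fps a ha).differentiableOn
  simpa [differentiableOn_univ] using this

lemma rk_uniq (a c : ℕ → ℂ) (ha : ∀ z : ℂ, Summable fun n => ‖a n * z ^ n‖)
    (hc : ∀ z : ℂ, Summable fun n => ‖c n * z ^ n‖)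
    (h : ∀ z : ℂ, ∑' n, a n * z ^ n = ∑' n, c n * z ^ n) : a = c := by
  have h1 := (rk_fps a ha).hasFPowerSeriesAt
  have h2 := (rk_fps c hc).hasFPowerSeriesAt
  rw [← funext h] at h2
  have := h1.eq_formalMultilinearSeries h2
  exact FormalMultilinearSeries.ofScalars_series_injective ℂ ℂ this

lemma rk_linear (f : ℂ → ℂ) (hf : Differentiable ℂ f) (M r : ℝ) (hM : 0 < M) (hr : 0 ≤ r)
    (h : ∀ z, (f z).re ≤ M + r * ‖z‖) : ∃ α β : ℂ, ∀ z, f z = α + β * z := by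
  have hb : ∀ z, ‖f z‖ ≤ (2 * M + 3 * ‖f 0‖) + 4 * r * ‖z‖ := by
    intro z
    by_cases hz : z = 0
    · subst hz; simp; nlinarith [norm_nonneg (f 0)]
    have hz' : 0 < ‖z‖ := norm_pos_iff.mpr hz
    have := Complex.borelCaratheodory (f := f) (M := M + r * (2 * ‖z‖)) (R := 2 * ‖z‖) (z := z)
      (by positivity) hf.differentiableOn
      (by
        intro w hw
        simp only [Metric.mem_ball, dist_zero_right] at hw
        have := h w
        simp only [Set.mem_ofPred_eq]
        nlinarith) (by positivity) (by simp; linarith)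
    refine this.trans (le_of_eq ?_)
    have e : 2 * ‖z‖ - ‖z‖ = ‖z‖ := by ring
    rw [e]
    field_simp
    ring
  set A := 2 * M + 3 * ‖f 0‖ with hA
  have hA0 : 0 ≤ A := by positivity
  have h2 : ∀ c, iteratedDeriv 2 f c = 0 := by
    intro c
    have key : ∀ R : ℝ, 0 < R → ‖iteratedDeriv 2 f c‖ ≤
        2 * (A + 4 * r * ‖c‖) * (R⁻¹ * R⁻¹) + 8 * r * R⁻¹ := by
      intro R hR
      have := Complex.norm_iteratedDeriv_le_of_forall_mem_sphere_norm_le (f := f) (c := c)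
        (C := A + 4 * r * (‖c‖ + R)) 2 hR hf.diffContOnCl
        (by
          intro z hz
          refine (hb z).trans ?_
          have : ‖z‖ ≤ ‖c‖ + R := by
            rw [mem_sphere_iff_norm] at hz
            calc ‖z‖ = ‖c + (z - c)‖ := by congr 1; ring
              _ ≤ _ := by rw [← hz]; exact norm_add_le _ _
          gcongr)
      refine this.trans (le_of_eq ?_)
      simp [Nat.factorial]
      field_simp
      ring
    have ht : Filter.Tendsto (fun R : ℝ => 2 * (A + 4 * r * ‖c‖) * (R⁻¹ * R⁻¹) + 8 * r * R⁻¹)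
        Filter.atTop (nhds 0) := by
      have t := tendsto_inv_atTop_zero (𝕜 := ℝ)
      simpa using ((t.mul t).const_mul (2 * (A + 4 * r * ‖c‖))).add (t.const_mul (8 * r))
    have := ge_of_tendsto ht (Filter.eventually_atTop.mpr ⟨1, fun R hR => key R (by linarith)⟩)
    exact norm_le_zero_iff.mp this
  have hd : Differentiable ℂ (deriv f) :=
    (hf.contDiff (n := 2)).differentiable_deriv_two
  have h3 : ∀ z, deriv f z = deriv f 0 := fun z =>
    is_const_of_deriv_eq_zero hd (fun c => by
      have := h2 c
      simpa [iteratedDeriv_succ, iteratedDeriv_zero] using this) z 0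
  refine ⟨f 0, deriv f 0, fun z => ?_⟩
  have h4 := is_const_of_deriv_eq_zero (f := fun z => f z - deriv f 0 * z)
    (by fun_prop) (fun c => by
      have : HasDerivAt (fun z => f z - deriv f 0 * z) (deriv f c - deriv f 0 * 1) c :=
        (hf c).hasDerivAt.sub ((hasDerivAt_id c).const_mul _)
      rw [this.deriv, h3 c]; ring) z 0
  simp at h4
  linear_combination h4

lemma rk_log (G : ℂ → ℂ) (hG : Differentiable ℂ G) (h0 : ∀ z, G z ≠ 0) :
    ∃ g : ℂ → ℂ, Differentiable ℂ g ∧ ∀ z, G z = Complex.exp (g z) := by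
  have hd : Differentiable ℂ (fun z => deriv G z / G z) :=
    ((hG.contDiff (n := 2)).differentiable_deriv_two).div hG h0
  obtain ⟨g, hg⟩ := hd.isExactOn_univ
  have hg' : ∀ z, HasDerivAt g (deriv G z / G z) z := fun z => hg z trivial
  have hc : ∀ z, G z * Complex.exp (- g z) = G 0 * Complex.exp (- g 0) := fun z =>
    is_const_of_deriv_eq_zero (f := fun z => G z * Complex.exp (- g z))
      (fun z => (hG z).mul ((hg' z).differentiableAt.neg.cexp)) (fun z => by
        have := (hG z).hasDerivAt.mul ((hg' z).neg.cexp)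
        refine this.deriv.trans ?_
        have := h0 z
        field_simp
        simp) z 0
  refine ⟨fun z => g z + (Complex.log (G 0) - g 0), ?_, fun z => ?_⟩
  · exact fun z => ((hg' z).differentiableAt).add_const _
  · have := hc z
    rw [Complex.exp_neg, Complex.exp_neg] at this
    rw [Complex.exp_add, Complex.exp_sub, Complex.exp_log (h0 0)]
    have h1 := Complex.exp_ne_zero (g z)
    have h2 := Complex.exp_ne_zero (g 0)
    field_simp at this ⊢
    linear_combination this

lemma rk_seq (a b : ℕ → ℝ) (ha : ∀ n, 0 ≤ a n) (hb : ∀ n, 0 ≤ b n) (hs : HasSum a 1) (r : ℝ≥0)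
    (hc : ∀ n, ∑ kl ∈ Finset.HasAntidiagonal.antidiagonal n, a kl.1 * b kl.2
      = Real.exp (-r) * r ^ n / n.factorial) :
    ∃ s : ℝ≥0, ∀ n, a n = Real.exp (-s) * s ^ n / n.factorial := by
  have h00 : a 0 * b 0 = Real.exp (-r) := by simpa using hc 0
  have hp : 0 < a 0 * b 0 := h00 ▸ Real.exp_pos _
  have ha0 : 0 < a 0 := lt_of_le_of_ne (ha 0) (fun h => by simp [← h] at hp)
  have hb0 : 0 < b 0 := lt_of_le_of_ne (hb 0) (fun h => by simp [← h] at hp)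
  have hr := r.coe_nonneg
  have expS : ∀ x : ℝ, HasSum (fun n : ℕ => x ^ n / n.factorial) (Real.exp x) := fun x => by
    rw [Real.exp_eq_exp_ℝ]; exact NormedSpace.expSeries_div_hasSum_exp x
  have expC : ∀ x : ℂ, HasSum (fun n : ℕ => x ^ n / n.factorial) (Complex.exp x) := fun x => by
    rw [Complex.exp_eq_exp_ℂ]; exact NormedSpace.expSeries_div_hasSum_exp x
  have bnd : ∀ (u v : ℕ → ℝ), (∀ n, 0 ≤ u n) → (∀ n, 0 ≤ v n) → 0 < v 0 →
      (∀ n, ∑ kl ∈ Finset.HasAntidiagonal.antidiagonal n, u kl.1 * v kl.2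
        = Real.exp (-r) * r ^ n / n.factorial) →
      ∀ (z : ℂ) n, ‖(u n : ℂ) * z ^ n‖ ≤ (v 0)⁻¹ * ((r * ‖z‖) ^ n / n.factorial) := by
    intro u v hu hv hv0 hc z n
    have h1 : u n * v 0 ≤ Real.exp (-r) * r ^ n / n.factorial := by
      rw [← hc n]
      exact Finset.single_le_sum (f := fun kl : ℕ × ℕ => u kl.1 * v kl.2)
        (fun kl _ => mul_nonneg (hu _) (hv _)) (a := (n, 0)) (by simp)
    have h2 : Real.exp (-r) ≤ 1 := Real.exp_le_one_iff.mpr (by linarith)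
    have h3 : u n * v 0 ≤ r ^ n / n.factorial := h1.trans (by
      gcongr
      calc _ ≤ 1 * (r : ℝ) ^ n := by gcongr
        _ = _ := one_mul _)
    have h4 : u n ≤ (v 0)⁻¹ * (r ^ n / n.factorial) := by
      rw [inv_mul_eq_div, le_div_iff₀ hv0]; exact h3
    rw [norm_mul, norm_pow, Complex.norm_real, Real.norm_of_nonneg (hu n), mul_pow]
    calc u n * ‖z‖ ^ n ≤ ((v 0)⁻¹ * (r ^ n / n.factorial)) * ‖z‖ ^ n := by gcongr
      _ = _ := by ring
  have ba := bnd a b ha hb hb0 hc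
  have bb := bnd b a hb ha ha0 (fun n => by
    rw [← hc n]
    refine Finset.sum_nbij' Prod.swap Prod.swap ?_ ?_ ?_ ?_ ?_
    all_goals simp [mul_comm, add_comm])
  have sa : ∀ z : ℂ, Summable fun n => ‖(a n : ℂ) * z ^ n‖ := fun z =>
    Summable.of_nonneg_of_le (fun _ => norm_nonneg _) (ba z) ((expS _).summable.mul_left _)
  have sb : ∀ z : ℂ, Summable fun n => ‖(b n : ℂ) * z ^ n‖ := fun z =>
    Summable.of_nonneg_of_le (fun _ => norm_nonneg _) (bb z) ((expS _).summable.mul_left _)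
  have hprod : ∀ z : ℂ, (∑' n, (a n : ℂ) * z ^ n) * (∑' n, (b n : ℂ) * z ^ n)
      = Complex.exp (-r) * Complex.exp (r * z) := by
    intro z
    rw [tsum_mul_tsum_eq_tsum_sum_antidiagonal_of_summable_norm (sa z) (sb z)]
    rw [← (expC (r * z)).tsum_eq, ← tsum_mul_left]
    congr 1; ext n
    have : (∑ kl ∈ Finset.HasAntidiagonal.antidiagonal n, (a kl.1 : ℂ) * b kl.2)
      = Complex.exp (-r) * r ^ n / n.factorial := by
      have := congrArg (Complex.ofReal) (hc n)
      push_cast at this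
      exact this
    calc _ = (∑ kl ∈ Finset.HasAntidiagonal.antidiagonal n, (a kl.1 : ℂ) * b kl.2) * z ^ n := by
          rw [Finset.sum_mul]
          refine Finset.sum_congr rfl fun kl hkl => ?_
          rw [← Finset.HasAntidiagonal.mem_antidiagonal.mp hkl, pow_add]; ring
      _ = _ := by rw [this, mul_pow]; ring
  have hne : ∀ z : ℂ, (∑' n, (a n : ℂ) * z ^ n) ≠ 0 := fun z h => by
    have := hprod z
    rw [h, zero_mul] at this
    exact mul_ne_zero (Complex.exp_ne_zero _) (Complex.exp_ne_zero _) this.symm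
  obtain ⟨g, hg, hgG⟩ := rk_log _ (rk_diff _ sa) hne
  have hre : ∀ z, (g z).re ≤ (|Real.log (b 0)⁻¹| + 1) + r * ‖z‖ := by
    intro z
    have h1 : ‖∑' n, (a n : ℂ) * z ^ n‖ ≤ (b 0)⁻¹ * Real.exp (r * ‖z‖) :=
      tsum_of_norm_bounded ((expS _).mul_left _) (ba z)
    rw [hgG z, Complex.norm_exp] at h1
    have h2 : (g z).re ≤ Real.log (b 0)⁻¹ + r * ‖z‖ := by
      rw [← Real.exp_le_exp, Real.exp_add, Real.exp_log (by positivity)]; exact h1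
    linarith [le_abs_self (Real.log (b 0)⁻¹)]
  obtain ⟨α, β, hαβ⟩ := rk_linear g hg _ r (by positivity) hr hre
  have hE : ∀ z : ℂ, HasSum (fun n : ℕ => (Complex.exp α * β ^ n / n.factorial) * z ^ n)
      (Complex.exp α * Complex.exp (β * z)) := fun z => by
    refine ((expC (β * z)).mul_left (Complex.exp α)).congr_fun ?_
    intro n
    rw [mul_pow]; ring
  have hco := rk_uniq (fun n => (a n : ℂ)) (fun n => Complex.exp α * β ^ n / n.factorial) sa
    (fun z => (hE z).summable.norm) (fun z => by
      rw [(hE z).tsum_eq, hgG z, hαβ z, Complex.exp_add])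
  have hco' : ∀ n, (a n : ℂ) = Complex.exp α * β ^ n / n.factorial := fun n => congrFun hco n
  have e0 : (a 0 : ℂ) = Complex.exp α := by simpa using hco' 0
  have e1 : (a 1 : ℂ) = a 0 * β := by rw [e0]; simpa using hco' 1
  have hβ : β = ((a 1 / a 0 : ℝ) : ℂ) := by
    have : (a 0 : ℂ) ≠ 0 := by exact_mod_cast ha0.ne'
    push_cast
    field_simp
    rw [e1]; ring
  set s : ℝ := a 1 / a 0 with hsdef
  have hs0 : 0 ≤ s := div_nonneg (ha 1) (ha 0)
  have han : ∀ n, a n = a 0 * (s ^ n / n.factorial) := fun n => by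
    have := hco' n
    rw [← e0, hβ] at this
    have : (a n : ℂ) = ((a 0 * (s ^ n / n.factorial) : ℝ) : ℂ) := by
      rw [this]; push_cast; ring
    exact_mod_cast this
  have hsum : a 0 * Real.exp s = 1 :=
    (((expS s).mul_left (a 0)).congr_fun (fun n => han n)).unique hs
  refine ⟨s.toNNReal, fun n => ?_⟩
  have : a 0 = Real.exp (-s) := by
    rw [Real.exp_neg]; exact eq_inv_of_mul_eq_one_left hsum
  rw [han n, this]
  rw [Real.coe_toNNReal s hs0]
  ring

theorem raikov_consequence
    {Ω : Type*} [MeasurableSpace Ω] (P : Measure Ω) [IsProbabilityMeasure P]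
    (X Y : Ω → ℕ) (hX : Measurable X) (hY : Measurable Y)
    (hindep : IndepFun X Y P)
    (hnotPoisson : ∀ (r : ℝ≥0) (c : ℕ),
      P.map X ≠ (poissonMeasure r).map (fun n => n + c)) :
    ∀ r : ℝ≥0, P.map (fun ω => X ω + Y ω) ≠ poissonMeasure r := by
  intro r hr
  have : IsProbabilityMeasure (P.map X) := Measure.isProbabilityMeasure_map hX.aemeasurable
  obtain ⟨s, hs⟩ := rk_seq (fun n => (P.map X).real {n}) (fun n => (P.map Y).real {n})
    (fun _ => measureReal_nonneg) (fun _ => measureReal_nonneg)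
    (by
      have := hasSum_integral_iUnion (μ := P.map X) (f := fun _ => (1 : ℝ))
        (s := fun n : ℕ => ({n} : Set ℕ)) (fun n => measurableSet_singleton n)
        (fun i j hij => by simpa using hij) (integrable_const _).integrableOn
      rw [Set.iUnion_of_singleton] at this
      simpa [Measure.real] using this) r
    (by
      intro n
      rw [← poissonMeasure_real_singleton, ← hr, map_measureReal_apply (by fun_prop) (by simp)]
      have hU : (fun ω => X ω + Y ω) ⁻¹' {n} =
          ⋃ kl ∈ Finset.HasAntidiagonal.antidiagonal n, (X ⁻¹' {kl.1} ∩ Y ⁻¹' {kl.2}) := by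
        ext ω; simp
      rw [hU, measureReal_biUnion_finset]
      · refine Finset.sum_congr rfl fun kl _ => ?_
        rw [map_measureReal_apply hX (by simp), map_measureReal_apply hY (by simp)]
        simp only [Measure.real]
        rw [hindep.measure_inter_preimage_eq_mul _ _ (by simp) (by simp), ENNReal.toReal_mul]
      · intro i _ j _ hij
        rw [Function.onFun, Set.disjoint_left]
        rintro ω ⟨h1, h2⟩ ⟨h3, h4⟩
        simp at h1 h2 h3 h4
        exact hij (Prod.ext (h1.symm.trans h3) (h2.symm.trans h4))
      · intro kl _
        exact (hX (by simp)).inter (hY (by simp)))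
  apply hnotPoisson s 0
  simp only [add_zero, Measure.map_id']
  refine Measure.ext_of_singleton fun n => ?_
  rw [← ENNReal.toReal_eq_toReal_iff' (by simp) (by simp)]
  have := hs n
  rw [← poissonMeasure_real_singleton] at this
  exact this
end
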